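/- arXiv:2302.09773 — 4 statements merged into one kernel-verified Lean document; each statement's English description precedes it below -/
import Mathlib

section
/- For every integer s with 1 ≤ s ≤ N and each sign ε0 ∈ {1, −1}, the element g = x11^{2s} + ε0·x12^{2s} of A = A_{Nn}^{μλ} is a group-like element, i.e. Δ(g) = g ⊗ g and ε(g) = 1. -/
/-!
By the defining formula for `Δ(x_{1j})`, both `Δ(x₁₁) = x₁₁ ⊗ x₁₁ + x₁₂ ⊗ x₂₁` and
`Δ(x₁₂) = x₁₁ ⊗ x₁₂ + x₁₂ ⊗ x₂₂` are sums of two elements annihilating each other, because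
`x₁₁ x₁₂ = x₁₂ x₁₁ = 0`. Hence `Δ` of a positive power is the sum of the powers of the two terms
(`add_pow_of_mul_eq_zero`). For an even exponent, `x₂₁² = x₁₂²` and `x₂₂² = x₁₁²` turn these into
`Δ(a) = a ⊗ a + b ⊗ b` and `Δ(b) = a ⊗ b + b ⊗ a`, where `a = x₁₁^{2s}` and `b = x₁₂^{2s}`.
With `ε₀² = 1` this gives `Δ(a + ε₀ b) = (a + ε₀ b) ⊗ (a + ε₀ b)`.
-/

open scoped TensorProduct

noncomputable section

/-- The alternating product `x i j * x (i+1) (j+1) * x i j * ⋯` with `m` factors,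
    i.e. `χ_{ij}^m` for the Suzuki presentation (indices taken in `Fin 2`). -/
def chi {A : Type*} [Ring A] (x : Fin 2 → Fin 2 → A) : Fin 2 → Fin 2 → ℕ → A
  | _, _, 0 => 1
  | i, j, (m + 1) => x i j * chi x (i + 1) (j + 1) (m)

/-- A presentation of the Suzuki Hopf algebra `A_{Nn}^{μλ}` over `k`:
`x 0 0 = x₁₁`, `x 0 1 = x₁₂`, `x 1 0 = x₂₁`, `x 1 1 = x₂₂`. -/
structure Suzuki (k A : Type*) [Field k] [CharZero k] [IsAlgClosed k]
    [Ring A] [HopfAlgebra k A] where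
  N : ℕ
  n : ℕ
  hN : 1 ≤ N
  hn : 2 ≤ n
  μ : k
  lam : k
  hμ : μ = 1 ∨ μ = -1
  hlam : lam = 1 ∨ lam = -1
  x : Fin 2 → Fin 2 → A
  gen : Algebra.adjoin k (Set.range fun p : Fin 2 × Fin 2 => x p.1 p.2) = ⊤
  rel_sq1 : x 0 0 ^ 2 = x 1 1 ^ 2
  rel_sq2 : x 0 1 ^ 2 = x 1 0 ^ 2
  rel_chi1 : chi x 1 0 n = lam • chi x 0 1 n
  rel_chi2 : chi x 0 0 n = chi x 1 1 n
  rel_mu : x 0 0 ^ (2 * N) + μ • x 0 1 ^ (2 * N) = 1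
  rel_odd : ∀ i j i' j' : Fin 2, Odd ((i : ℕ) + j + i' + j') → x i j * x i' j' = 0
  comul_chi : ∀ (i j : Fin 2) (m : ℕ), 1 ≤ m →
    Coalgebra.comul (R := k) (chi x i j m)
      = chi x i 0 m ⊗ₜ[k] chi x 0 j m + chi x i 1 m ⊗ₜ[k] chi x 1 j m
  counit_x : ∀ i j : Fin 2,
    Coalgebra.counit (R := k) (x i j) = if i = j then (1 : k) else 0
  antipode_x : ∀ i j : Fin 2,
    HopfAlgebra.antipode (R := k) (x i j) = x j i ^ (4 * N - 1)
  basis_indep : LinearIndependent k (fun p : Fin 2 × Fin (2 * N) × Fin n =>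
      if p.1 = 0 then x 0 0 ^ ((p.2.1 : ℕ) + 1) * chi x 1 1 (p.2.2 : ℕ)
      else x 0 1 ^ ((p.2.1 : ℕ) + 1) * chi x 1 0 (p.2.2 : ℕ))
  basis_span : Submodule.span k (Set.range fun p : Fin 2 × Fin (2 * N) × Fin n =>
      if p.1 = 0 then x 0 0 ^ ((p.2.1 : ℕ) + 1) * chi x 1 1 (p.2.2 : ℕ)
      else x 0 1 ^ ((p.2.1 : ℕ) + 1) * chi x 1 0 (p.2.2 : ℕ)) = ⊤

/-- A Hopf algebra automorphism of `A`: a bijective `k`-linear map `A → A` that is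
both an algebra homomorphism and a coalgebra homomorphism. -/
def IsHopfAut (k : Type*) {A : Type*} [Field k] [Ring A] [HopfAlgebra k A]
    (ψ : A ≃ₗ[k] A) : Prop :=
  (∀ a b : A, ψ (a * b) = ψ a * ψ b) ∧ ψ 1 = 1 ∧
  (∀ a : A, Coalgebra.comul (R := k) (ψ a)
      = TensorProduct.map ψ.toLinearMap ψ.toLinearMap (Coalgebra.comul (R := k) a)) ∧
  (∀ a : A, Coalgebra.counit (R := k) (ψ a) = Coalgebra.counit (R := k) a)

/-- Powers of a sum of two mutually annihilating elements; `m ≥ 1` excludes `1 = 1 + 1`. -/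
lemma add_pow_of_mul_eq_zero {B : Type*} [Ring B] {p q : B} (hpq : p * q = 0) (hqp : q * p = 0)
    {m : ℕ} (hm : 1 ≤ m) : (p + q) ^ m = p ^ m + q ^ m := by
  induction m, hm using Nat.le_induction with
  | base => simp
  | succ m hm ih =>
    obtain ⟨r, rfl⟩ : ∃ r, m = r + 1 := ⟨m - 1, by omega⟩
    have h1 : p ^ (r + 1) * q = 0 := by rw [pow_succ, mul_assoc, hpq, mul_zero]
    have h2 : q ^ (r + 1) * p = 0 := by rw [pow_succ, mul_assoc, hqp, mul_zero]
    rw [pow_succ, ih, add_mul, mul_add, mul_add, h1, h2, add_zero, zero_add, ← pow_succ,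
      ← pow_succ]

/-- `g = x₁₁^{2s} + ε₀ x₁₂^{2s}` is group-like for `1 ≤ s ≤ N`, `ε₀ = ±1`. -/
theorem stmt1 (k A : Type*) [Field k] [CharZero k] [IsAlgClosed k]
    [Ring A] [HopfAlgebra k A] (S : Suzuki k A)
    (s : ℕ) (hs1 : 1 ≤ s) (hs2 : s ≤ S.N) (ε0 : k) (hε0 : ε0 = 1 ∨ ε0 = -1) :
    Coalgebra.comul (R := k) (S.x 0 0 ^ (2 * s) + ε0 • S.x 0 1 ^ (2 * s))
      = (S.x 0 0 ^ (2 * s) + ε0 • S.x 0 1 ^ (2 * s))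
          ⊗ₜ[k] (S.x 0 0 ^ (2 * s) + ε0 • S.x 0 1 ^ (2 * s))
    ∧ Coalgebra.counit (R := k) (S.x 0 0 ^ (2 * s) + ε0 • S.x 0 1 ^ (2 * s)) = 1 := by
  have hsq1 := S.rel_sq1
  have hsq2 := S.rel_sq2
  have hodd := S.rel_odd
  have hchi := S.comul_chi
  have hcounit := S.counit_x
  generalize S.x = x at hsq1 hsq2 hodd hchi hcounit ⊢
  have hcomul : ∀ i j, Coalgebra.comul (R := k) (x i j)
      = x i 0 ⊗ₜ[k] x 0 j + x i 1 ⊗ₜ[k] x 1 j := fun i j => by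
    simpa [chi] using hchi i j 1 le_rfl
  have h01 : x 0 0 * x 0 1 = 0 := hodd 0 0 0 1 (by decide)
  have h10 : x 0 1 * x 0 0 = 0 := hodd 0 1 0 0 (by decide)
  have e1 : Coalgebra.comul (R := k) (x 0 0 ^ (2 * s))
      = (x 0 0 ^ (2 * s)) ⊗ₜ[k] (x 0 0 ^ (2 * s))
        + (x 0 1 ^ (2 * s)) ⊗ₜ[k] (x 0 1 ^ (2 * s)) := by
    rw [Bialgebra.comul_pow, hcomul,
      add_pow_of_mul_eq_zero (by simp [h01]) (by simp [h10]) (by omega)]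
    simp only [Algebra.TensorProduct.tmul_pow, pow_mul, hsq2]
  have e2 : Coalgebra.comul (R := k) (x 0 1 ^ (2 * s))
      = (x 0 0 ^ (2 * s)) ⊗ₜ[k] (x 0 1 ^ (2 * s))
        + (x 0 1 ^ (2 * s)) ⊗ₜ[k] (x 0 0 ^ (2 * s)) := by
    rw [Bialgebra.comul_pow, hcomul,
      add_pow_of_mul_eq_zero (by simp [h01]) (by simp [h10]) (by omega)]
    simp only [Algebra.TensorProduct.tmul_pow, pow_mul, hsq1]
  have hε : ε0 * ε0 = 1 := by rcases hε0 with rfl | rfl <;> simp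
  refine ⟨?_, ?_⟩
  · rw [map_add, map_smul, e1, e2]
    simp only [TensorProduct.add_tmul, TensorProduct.tmul_add, TensorProduct.smul_tmul',
      TensorProduct.tmul_smul, smul_add, smul_smul, hε, one_smul]
    abel
  · have h2s : 2 * s ≠ 0 := by omega
    simp [map_add, map_smul, Bialgebra.counit_pow, hcounit, h2s]
end
end

section
/- Assume n = 2m + 1 is odd and let ω ∈ k satisfy ω² = λ. For every integer s with 1 ≤ s ≤ N and each sign ε0 ∈ {1, −1}, the element h = x11^{2s+1}·χ22^{n−1} + ε0·ω·x12^{2s+1}·χ21^{n−1} of A = A_{Nn}^{μλ} is group-like, i.e. Δ(h) = h ⊗ h and ε(h) = 1. -/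
/-!
Write `a = x₁₁²`, `b = x₁₂²`, `C = χ₁₁ⁿ`, `D = χ₁₂ⁿ`. Then `h = aˢ C + ε₀ ω bˢ D`.
The products `ab`, `ba`, `aD`, `bC` vanish by the parity relation, and the comultiplication of
the generators gives
`Δ(aˢ) = aˢ ⊗ aˢ + bˢ ⊗ bˢ`, `Δ(bˢ) = aˢ ⊗ bˢ + bˢ ⊗ aˢ` for `s ≥ 1`
(`comul_pow_even_diag`, `comul_pow_even_off`). The relations `χ₂₁ⁿ = λ χ₁₂ⁿ` and `χ₁₁ⁿ = χ₂₂ⁿ`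
turn the comultiplication rule for `χ` into `Δ(C) = C ⊗ C + λ D ⊗ D` and `Δ(D) = C ⊗ D + D ⊗ C`. Multiplying, with `P = aˢ C` and
`Q = bˢ D`, yields `Δ(P) = P ⊗ P + λ Q ⊗ Q` and `Δ(Q) = P ⊗ Q + Q ⊗ P`, so `P + e Q` is
group-like whenever `e² = λ`; here `e = ε₀ ω`.
-/

open scoped TensorProduct

noncomputable section

namespace Suzuki

variable {k A : Type*} [Field k] [CharZero k] [IsAlgClosed k] [Ring A] [HopfAlgebra k A]

lemma comul_x (S : Suzuki k A) (i j : Fin 2) :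
    Coalgebra.comul (R := k) (S.x i j)
      = S.x i 0 ⊗ₜ[k] S.x 0 j + S.x i 1 ⊗ₜ[k] S.x 1 j := by
  simpa [chi] using S.comul_chi i j 1 le_rfl

lemma diag_mul_off (S : Suzuki k A) : S.x 0 0 * S.x 0 1 = 0 :=
  S.rel_odd 0 0 0 1 (by decide)

lemma off_mul_diag (S : Suzuki k A) : S.x 0 1 * S.x 0 0 = 0 :=
  S.rel_odd 0 1 0 0 (by decide)

lemma comul_sq_diag (S : Suzuki k A) :
    Coalgebra.comul (R := k) (S.x 0 0 ^ 2)
      = (S.x 0 0 ^ 2) ⊗ₜ[k] (S.x 0 0 ^ 2) + (S.x 0 1 ^ 2) ⊗ₜ[k] (S.x 0 1 ^ 2) := by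
  nth_rewrite 2 [S.rel_sq2]
  simp only [pow_two, Bialgebra.comul_mul, S.comul_x, add_mul, mul_add,
    Algebra.TensorProduct.tmul_mul_tmul, S.diag_mul_off, S.off_mul_diag,
    TensorProduct.zero_tmul, add_zero, zero_add]

lemma comul_sq_off (S : Suzuki k A) :
    Coalgebra.comul (R := k) (S.x 0 1 ^ 2)
      = (S.x 0 0 ^ 2) ⊗ₜ[k] (S.x 0 1 ^ 2) + (S.x 0 1 ^ 2) ⊗ₜ[k] (S.x 0 0 ^ 2) := by
  nth_rewrite 2 [S.rel_sq1]
  simp only [pow_two, Bialgebra.comul_mul, S.comul_x, add_mul, mul_add,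
    Algebra.TensorProduct.tmul_mul_tmul, S.diag_mul_off, S.off_mul_diag,
    TensorProduct.zero_tmul, add_zero, zero_add]

lemma pow_diag_mul_off (S : Suzuki k A) (s : ℕ) (y : A) :
    S.x 0 0 ^ (2 * (s + 1)) * (S.x 0 1 * y) = 0 := by
  rw [show 2 * (s + 1) = (2 * s + 1) + 1 by ring, pow_succ, mul_assoc, ← mul_assoc (S.x 0 0),
    S.diag_mul_off, zero_mul, mul_zero]

lemma pow_off_mul_diag (S : Suzuki k A) (s : ℕ) (y : A) :
    S.x 0 1 ^ (2 * (s + 1)) * (S.x 0 0 * y) = 0 := by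
  rw [show 2 * (s + 1) = (2 * s + 1) + 1 by ring, pow_succ, mul_assoc, ← mul_assoc (S.x 0 1),
    S.off_mul_diag, zero_mul, mul_zero]

/-- The exponent `2 * (s + 1)` is positive because `Δ(1) = 1 ⊗ 1` breaks the formula at exponent `0`. -/
lemma comul_pow_even_diag (S : Suzuki k A) (s : ℕ) :
    Coalgebra.comul (R := k) (S.x 0 0 ^ (2 * (s + 1)))
      = (S.x 0 0 ^ (2 * (s + 1))) ⊗ₜ[k] (S.x 0 0 ^ (2 * (s + 1)))
        + (S.x 0 1 ^ (2 * (s + 1))) ⊗ₜ[k] (S.x 0 1 ^ (2 * (s + 1))) := by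
  induction s with
  | zero => simpa using S.comul_sq_diag
  | succ s ih =>
    have h1 : S.x 0 0 ^ (2 * (s + 1)) * S.x 0 1 ^ 2 = 0 := by
      rw [pow_two, S.pow_diag_mul_off]
    have h2 : S.x 0 1 ^ (2 * (s + 1)) * S.x 0 0 ^ 2 = 0 := by
      rw [pow_two, S.pow_off_mul_diag]
    rw [show 2 * (s + 1 + 1) = 2 * (s + 1) + 2 by ring]
    simp only [pow_add _ (2 * (s + 1)) 2, Bialgebra.comul_mul, ih, S.comul_sq_diag, add_mul,
      mul_add (_ ⊗ₜ[k] _), Algebra.TensorProduct.tmul_mul_tmul, h1, h2,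
      TensorProduct.zero_tmul, add_zero, zero_add]

lemma comul_pow_even_off (S : Suzuki k A) (s : ℕ) :
    Coalgebra.comul (R := k) (S.x 0 1 ^ (2 * (s + 1)))
      = (S.x 0 0 ^ (2 * (s + 1))) ⊗ₜ[k] (S.x 0 1 ^ (2 * (s + 1)))
        + (S.x 0 1 ^ (2 * (s + 1))) ⊗ₜ[k] (S.x 0 0 ^ (2 * (s + 1))) := by
  induction s with
  | zero => simpa using S.comul_sq_off
  | succ s ih =>
    have h1 : S.x 0 0 ^ (2 * (s + 1)) * S.x 0 1 ^ 2 = 0 := by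
      rw [pow_two, S.pow_diag_mul_off]
    have h2 : S.x 0 1 ^ (2 * (s + 1)) * S.x 0 0 ^ 2 = 0 := by
      rw [pow_two, S.pow_off_mul_diag]
    rw [show 2 * (s + 1 + 1) = 2 * (s + 1) + 2 by ring]
    simp only [pow_add _ (2 * (s + 1)) 2, Bialgebra.comul_mul, ih, S.comul_sq_off, add_mul,
      mul_add (_ ⊗ₜ[k] _), Algebra.TensorProduct.tmul_mul_tmul, h1, h2,
      TensorProduct.zero_tmul, add_zero, zero_add]

lemma counit_chi_diag (S : Suzuki k A) (i : Fin 2) (t : ℕ) :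
    Coalgebra.counit (R := k) (chi S.x i i t) = 1 := by
  induction t generalizing i with
  | zero => simp [chi]
  | succ t ih => simp [chi, Bialgebra.counit_mul, S.counit_x, ih]

end Suzuki

/-- for odd `n = 2m+1`, `ω² = λ`, `1 ≤ s ≤ N`, `ε₀ = ±1`, the element
`h = x₁₁^{2s+1} χ₂₂^{n-1} + ε₀ ω x₁₂^{2s+1} χ₂₁^{n-1}` is group-like. -/
theorem stmt2 (k A : Type*) [Field k] [CharZero k] [IsAlgClosed k]
    [Ring A] [HopfAlgebra k A] (S : Suzuki k A)
    (m : ℕ) (hm : S.n = 2 * m + 1) (ω : k) (hω : ω ^ 2 = S.lam)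
    (s : ℕ) (hs1 : 1 ≤ s) (hs2 : s ≤ S.N) (ε0 : k) (hε0 : ε0 = 1 ∨ ε0 = -1) :
    Coalgebra.comul (R := k)
        (S.x 0 0 ^ (2 * s + 1) * chi S.x 1 1 (S.n - 1)
          + (ε0 * ω) • (S.x 0 1 ^ (2 * s + 1) * chi S.x 1 0 (S.n - 1)))
      = (S.x 0 0 ^ (2 * s + 1) * chi S.x 1 1 (S.n - 1)
          + (ε0 * ω) • (S.x 0 1 ^ (2 * s + 1) * chi S.x 1 0 (S.n - 1)))
        ⊗ₜ[k]
        (S.x 0 0 ^ (2 * s + 1) * chi S.x 1 1 (S.n - 1)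
          + (ε0 * ω) • (S.x 0 1 ^ (2 * s + 1) * chi S.x 1 0 (S.n - 1)))
    ∧ Coalgebra.counit (R := k)
        (S.x 0 0 ^ (2 * s + 1) * chi S.x 1 1 (S.n - 1)
          + (ε0 * ω) • (S.x 0 1 ^ (2 * s + 1) * chi S.x 1 0 (S.n - 1))) = 1 := by
  obtain ⟨s, rfl⟩ := Nat.exists_eq_add_of_le' hs1
  obtain ⟨t, ht⟩ : ∃ t, S.n = t + 1 := ⟨2 * m, hm⟩
  have hn1 : S.n - 1 = t := by omega
  have he : (ε0 * ω) * (ε0 * ω) = S.lam := by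
    rw [← hω]
    rcases hε0 with rfl | rfl <;> ring
  have hC : S.x 0 0 * chi S.x 1 1 t = chi S.x 0 0 S.n := by rw [ht]; rfl
  have hD : S.x 0 1 * chi S.x 1 0 t = chi S.x 0 1 S.n := by rw [ht]; rfl
  have hdC := S.comul_chi 0 0 S.n (by omega)
  have hdD := S.comul_chi 0 1 S.n (by omega)
  rw [S.rel_chi1] at hdC
  rw [← S.rel_chi2] at hdD
  have hCz := S.pow_off_mul_diag s (chi S.x 1 1 t)
  have hDz := S.pow_diag_mul_off s (chi S.x 1 0 t)
  have hP := S.comul_pow_even_diag s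
  have hQ := S.comul_pow_even_off s
  rw [hC] at hCz
  rw [hD] at hDz
  rw [hn1, pow_succ, pow_succ, mul_assoc, mul_assoc, hC, hD]
  constructor
  · generalize S.x 0 0 ^ (2 * (s + 1)) = a at *
    generalize S.x 0 1 ^ (2 * (s + 1)) = b at *
    generalize chi S.x 0 0 S.n = C at *
    generalize chi S.x 0 1 S.n = D at *
    simp only [map_add, map_smul, Bialgebra.comul_mul, hP, hQ, hdC, hdD, add_mul, mul_add,
      Algebra.TensorProduct.tmul_mul_tmul, mul_smul_comm, hCz, hDz,
      TensorProduct.tmul_zero, smul_zero, add_zero, zero_add, TensorProduct.add_tmul,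
      TensorProduct.tmul_add, TensorProduct.tmul_smul, TensorProduct.smul_tmul', smul_add,
      smul_smul, he]
    abel
  · rw [← hD]
    simp [Bialgebra.counit_mul, Bialgebra.counit_pow, S.counit_x, S.counit_chi_diag]
end
end

section
/- Assume n is odd. For every Hopf algebra automorphism ψ of A = A_{Nn}^{μλ} there exist integers s, t with 1 ≤ s ≤ N and 1 ≤ t ≤ n − 1 such that ψ(C_{N1}) = C_{st}, where C_{N1} is the k-linear span of {x11, x12, x21, x22}. -/
/-! As a coalgebra, `A` is the direct sum of the blocks `C_{st}` with `1 ≤ s ≤ N`, `0 ≤ t ≤ n`,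
where `C_{st}` is spanned by the matrix coefficients `z_{ij} = x_{ij}^{2s} χ_{ij}^t`, which satisfy
`Δ z_{ij} = ∑_k z_{ik} ⊗ z_{kj}` (`comul_Z`). Indeed, up to nonzero scalars, the given basis of `A`
is made of such elements (`basis_eq_smul_Z`, `Z_eq_smul_basis`).

Let `P` be the projection onto a block and `e = ε ∘ P`. Then
`(e ⊗ id) Δ = P = (id ⊗ e) Δ` (`rTensor_proj`, `lTensor_proj`). For an automorphism `ψ`, the
elements `y_{ij} = ψ(x_{ij})` are linearly independent and again satisfy
`Δ y_{ij} = ∑_k y_{ik} ⊗ y_{kj}`, so that `∑_k e(y_{ik}) y_{kj} = ∑_k e(y_{kj}) y_{ik}`. Comparing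
coefficients, `(e(y_{ij}))` is a scalar matrix `c`, whence `P y_{ij} = c y_{ij}`
(`scalar_of_central`). For a block with `P y_{11} ≠ 0` the scalar `c` is nonzero and so
`ψ(C_{N1}) ⊆ C_{st}`. Since `ψ(C_{N1})` has dimension `4`, while `C_{st}` has dimension at most `4`,
and at most `2` when `t = 0` or `t = n`, the inclusion is an equality and `1 ≤ t ≤ n - 1`. -/

open scoped TensorProduct

noncomputable section

namespace Suzuki

variable {k A : Type*} [Field k] [CharZero k] [IsAlgClosed k] [Ring A] [HopfAlgebra k A]

/-! ### The matrix coefficients of a block -/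

/-- The matrix coefficient `x_{ij}^{2s} χ_{ij}^t` of the block `C_{st}`. The values `t = 0` and
`t = n` are allowed as well; the corresponding blocks are spanned by group-like elements. -/
def Z (S : Suzuki k A) (s t : ℕ) (i j : Fin 2) : A := S.x i j ^ (2 * s) * chi S.x i j t

lemma mul_zero_row (S : Suzuki k A) (i : Fin 2) : S.x i 0 * S.x i 1 = 0 ∧ S.x i 1 * S.x i 0 = 0 := by
  constructor <;> apply S.rel_odd <;> fin_cases i <;> decide

lemma pow_mul_chi_zero (S : Suzuki k A) {i j i' j' : Fin 2} (h : S.x i j * S.x i' j' = 0)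
    {m t : ℕ} (hm : m ≠ 0) (ht : t ≠ 0) : S.x i j ^ m * chi S.x i' j' t = 0 := by
  obtain ⟨m, rfl⟩ := Nat.exists_eq_succ_of_ne_zero hm
  obtain ⟨t, rfl⟩ := Nat.exists_eq_succ_of_ne_zero ht
  rw [Nat.succ_eq_add_one, Nat.succ_eq_add_one, pow_succ, chi, mul_assoc, ← mul_assoc (S.x i j), h]
  simp

lemma comul_pow (S : Suzuki k A) (i j : Fin 2) (m : ℕ) (hm : 1 ≤ m) :
    Coalgebra.comul (R := k) (S.x i j ^ m)
      = (S.x i 0 ^ m) ⊗ₜ[k] (S.x 0 j ^ m) + (S.x i 1 ^ m) ⊗ₜ[k] (S.x 1 j ^ m) := by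
  induction m, hm using Nat.le_induction with
  | base => simpa [chi] using S.comul_chi i j 1 le_rfl
  | succ m hm ih =>
    have h1 := S.comul_chi i j 1 le_rfl
    simp only [chi, mul_one] at h1
    have e0 : S.x i 0 ^ m * S.x i 1 = 0 := by
      simpa [chi] using S.pow_mul_chi_zero (S.mul_zero_row i).1 (by lia : m ≠ 0) one_ne_zero
    have e1 : S.x i 1 ^ m * S.x i 0 = 0 := by
      simpa [chi] using S.pow_mul_chi_zero (S.mul_zero_row i).2 (by lia : m ≠ 0) one_ne_zero
    rw [pow_succ, Bialgebra.comul_mul, ih, h1]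
    simp [add_mul, mul_add, Algebra.TensorProduct.tmul_mul_tmul, e0, e1, pow_succ]

/-- The elements `Z s t i j` are the coefficients of a two-dimensional comodule. The mixed
terms vanish because `x_{i1} x_{i2} = x_{i2} x_{i1} = 0`. -/
lemma comul_Z (S : Suzuki k A) (s t : ℕ) (hs : 1 ≤ s) (i j : Fin 2) :
    Coalgebra.comul (R := k) (S.Z s t i j)
      = S.Z s t i 0 ⊗ₜ[k] S.Z s t 0 j + S.Z s t i 1 ⊗ₜ[k] S.Z s t 1 j := by
  rcases Nat.eq_zero_or_pos t with rfl | ht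
  · simpa [Z, chi] using S.comul_pow i j (2 * s) (by lia)
  · have e0 := S.pow_mul_chi_zero (S.mul_zero_row i).1 (by lia : 2 * s ≠ 0) ht.ne'
    have e1 := S.pow_mul_chi_zero (S.mul_zero_row i).2 (by lia : 2 * s ≠ 0) ht.ne'
    rw [Z, Bialgebra.comul_mul, S.comul_pow i j _ (by lia), S.comul_chi i j t ht]
    simp [add_mul, mul_add, Algebra.TensorProduct.tmul_mul_tmul, e0, e1, Z]

lemma x_sq (S : Suzuki k A) (r : Fin 2) : S.x 1 (r + 1) ^ 2 = S.x 0 r ^ 2 := by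
  fin_cases r
  · exact S.rel_sq1.symm
  · exact S.rel_sq2.symm

lemma x_pow_even (S : Suzuki k A) (r : Fin 2) (s : ℕ) :
    S.x 1 (r + 1) ^ (2 * s) = S.x 0 r ^ (2 * s) := by
  rw [pow_mul, x_sq, ← pow_mul]

/-- The sign `1` or `λ` by which `χ_{11}^n, χ_{22}^n` resp. `χ_{12}^n, χ_{21}^n` differ. -/
def sgnLam (S : Suzuki k A) (r : Fin 2) : k := if r = 0 then 1 else S.lam

/-- The sign `1` or `μ` with which `x_{11}^{2N}` resp. `x_{12}^{2N}` enters the relation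
`x_{11}^{2N} + μ x_{12}^{2N} = 1`. -/
def sgnMu (S : Suzuki k A) (r : Fin 2) : k := if r = 0 then 1 else S.μ

lemma sgnMu_sq (S : Suzuki k A) (r : Fin 2) : S.sgnMu r * S.sgnMu r = 1 := by
  rcases S.hμ with h | h <;> fin_cases r <;> simp [sgnMu, h]

lemma chi_n (S : Suzuki k A) (r : Fin 2) :
    chi S.x 1 (r + 1) S.n = S.sgnLam r • chi S.x 0 r S.n := by
  fin_cases r
  · simpa [sgnLam] using S.rel_chi2.symm
  · simpa [sgnLam] using S.rel_chi1

/-- `x_{11}^{2N}` resp. `μ x_{12}^{2N}` is a left unit for every `x_{ij}` of the same parity. -/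
lemma pow_twoN_mul (S : Suzuki k A) (r i : Fin 2) :
    S.x 0 r ^ (2 * S.N) * S.x i (i + r) = S.sgnMu r • S.x i (i + r) := by
  have hN := S.hN
  have key : ∀ q q' : Fin 2, S.x 0 q * S.x i q' = 0 → S.x 0 q ^ (2 * S.N) * S.x i q' = 0 :=
    fun q q' h => by
      simpa [chi] using S.pow_mul_chi_zero h (by lia : 2 * S.N ≠ 0) one_ne_zero
  have h : (S.x 0 0 ^ (2 * S.N) + S.μ • S.x 0 1 ^ (2 * S.N)) * S.x i (i + r) = S.x i (i + r) := by
    rw [S.rel_mu, one_mul]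
  rw [add_mul, smul_mul_assoc] at h
  fin_cases r
  · rw [key 1 _ (by apply S.rel_odd; fin_cases i <;> decide)] at h
    simpa [sgnMu] using h
  · rw [key 0 _ (by apply S.rel_odd; fin_cases i <;> decide), zero_add] at h
    have h2 := congrArg (fun a => S.μ • a) h
    have := S.sgnMu_sq 1
    simp only [sgnMu, one_ne_zero, if_false] at this
    simp only [smul_smul, this, one_smul] at h2
    simpa [sgnMu] using h2

/-! ### Comparison with the basis -/

/-- The given basis of `A`. -/
def bas (S : Suzuki k A) : Module.Basis (Fin 2 × Fin (2 * S.N) × Fin S.n) k A :=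
  Module.Basis.mk S.basis_indep S.basis_span.ge

lemma bas_apply (S : Suzuki k A) (r : Fin 2) (a : Fin (2 * S.N)) (t : Fin S.n) :
    S.bas (r, a, t) = S.x 0 r ^ ((a : ℕ) + 1) * chi S.x 1 (r + 1) t := by
  rw [bas, Module.Basis.mk_apply]
  fin_cases r <;> simp

/-- The block `(s, t)` containing a basis element `x_{1r}^m χ^t` with `m = a + 1`: it is `(m/2, t)`
for even `m` and `((m-1)/2, t+1)` for odd `m`, where `m = 1` counts as `m = 2N + 1`. -/
def deg (S : Suzuki k A) (p : Fin 2 × Fin (2 * S.N) × Fin S.n) : ℕ × ℕ :=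
  if (p.2.1 : ℕ) = 0 then (S.N, p.2.2 + 1)
  else if (p.2.1 : ℕ) % 2 = 1 then ((p.2.1 + 1) / 2, p.2.2) else (p.2.1 / 2, p.2.2 + 1)

lemma Z_one (S : Suzuki k A) (r : Fin 2) (s t : ℕ) :
    S.Z s t 1 (r + 1) = S.x 0 r ^ (2 * s) * chi S.x 1 (r + 1) t := by
  rw [Z, x_pow_even]

lemma Z_zero_succ (S : Suzuki k A) (r : Fin 2) (s t : ℕ) :
    S.Z s (t + 1) 0 r = S.x 0 r ^ (2 * s + 1) * chi S.x 1 (r + 1) t := by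
  rw [Z, chi, ← mul_assoc, ← pow_succ, zero_add]

lemma Z_zero_succ_N (S : Suzuki k A) (r : Fin 2) (t : ℕ) :
    S.Z S.N (t + 1) 0 r = S.sgnMu r • (S.x 0 r * chi S.x 1 (r + 1) t) := by
  have := S.pow_twoN_mul r 0
  rw [zero_add] at this
  rw [Z_zero_succ, pow_succ, this, smul_mul_assoc]

lemma Z_n (S : Suzuki k A) (r : Fin 2) (s : ℕ) :
    S.Z s S.n 1 (r + 1) = S.sgnLam r • S.Z s S.n 0 r := by
  rw [Z_one, chi_n, mul_smul_comm, Z]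

lemma Z_t_zero (S : Suzuki k A) (r : Fin 2) (s : ℕ) :
    S.Z s 0 1 (r + 1) = S.Z s 0 0 r := by
  rw [Z_one, Z, chi, chi]

lemma basis_eq_smul_Z (S : Suzuki k A) (p : Fin 2 × Fin (2 * S.N) × Fin S.n) :
    ∃ (c : k) (i j : Fin 2), S.bas p = c • S.Z (S.deg p).1 (S.deg p).2 i j := by
  obtain ⟨r, a, t⟩ := p
  rw [bas_apply]
  by_cases h0 : (a : ℕ) = 0
  · refine ⟨S.sgnMu r, 0, r, ?_⟩
    simp only [deg, h0, if_true]
    rw [Z_zero_succ_N, smul_smul, sgnMu_sq, one_smul, zero_add, pow_one]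
  by_cases h1 : (a : ℕ) % 2 = 1
  · refine ⟨1, 1, r + 1, ?_⟩
    simp only [deg, h0, h1, if_true, if_false]
    rw [Z_one, one_smul, show 2 * (((a : ℕ) + 1) / 2) = a + 1 by lia]
  · refine ⟨1, 0, r, ?_⟩
    simp only [deg, h0, h1, if_false]
    rw [Z_zero_succ, one_smul, show 2 * ((a : ℕ) / 2) = a by lia]

lemma deg_bounds (S : Suzuki k A) (p : Fin 2 × Fin (2 * S.N) × Fin S.n) :
    1 ≤ (S.deg p).1 ∧ (S.deg p).1 ≤ S.N ∧ (S.deg p).2 ≤ S.n := by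
  obtain ⟨r, a, t⟩ := p
  have := a.2
  have := t.2
  have := S.hN
  simp only [deg]
  split_ifs <;> simp only <;> lia

lemma Z_zero_eq (S : Suzuki k A) (r : Fin 2) (s t : ℕ) (hs : 1 ≤ s) (hs' : s ≤ S.N)
    (ht : t ≤ S.n) : ∃ (c : k) (p : _), S.deg p = (s, t) ∧ S.Z s t 0 r = c • S.bas p := by
  have hn := S.hn
  rcases t with _ | t
  · refine ⟨1, (r, ⟨2 * s - 1, by lia⟩, ⟨0, by lia⟩), ?_, ?_⟩
    · simp only [deg]
      rw [if_neg (by lia), if_pos (by lia)]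
      congr 1
      lia
    · rw [bas_apply, one_smul, ← Z_t_zero, Z_one]
      simp only
      rw [show 2 * s - 1 + 1 = 2 * s by lia]
  rcases hs'.eq_or_lt with rfl | hlt
  · refine ⟨S.sgnMu r, (r, ⟨0, by lia⟩, ⟨t, by lia⟩), by simp [deg], ?_⟩
    rw [bas_apply, Z_zero_succ_N]
    simp
  · refine ⟨1, (r, ⟨2 * s, by lia⟩, ⟨t, by lia⟩), ?_, ?_⟩
    · simp only [deg]
      rw [if_neg (by lia), if_neg (by lia)]
      congr 1
      lia
    · rw [bas_apply, one_smul, Z_zero_succ]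

lemma Z_eq_smul_basis (S : Suzuki k A) (i j : Fin 2) (s t : ℕ) (hs : 1 ≤ s) (hs' : s ≤ S.N)
    (ht : t ≤ S.n) : ∃ (c : k) (p : _), S.deg p = (s, t) ∧ S.Z s t i j = c • S.bas p := by
  obtain rfl | rfl : i = 0 ∨ i = 1 := by fin_cases i <;> simp
  · exact S.Z_zero_eq j s t hs hs' ht
  obtain ⟨r, rfl⟩ : ∃ r, j = r + 1 := ⟨j + 1, by fin_cases j <;> rfl⟩
  rcases ht.eq_or_lt with rfl | hlt
  · obtain ⟨c, p, hp, h⟩ := S.Z_zero_eq r s S.n hs hs' le_rfl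
    exact ⟨S.sgnLam r * c, p, hp, by rw [Z_n, h, smul_smul]⟩
  · refine ⟨1, (r, ⟨2 * s - 1, by lia⟩, ⟨t, hlt⟩), ?_, ?_⟩
    · simp only [deg]
      rw [if_neg (by lia), if_pos (by lia)]
      congr 1
      lia
    · rw [bas_apply, one_smul, Z_one]
      simp only
      rw [show 2 * s - 1 + 1 = 2 * s by lia]

/-! ### Block projections -/

/-- The projection of `A` onto the block of index `α` along all other blocks. -/
def proj (S : Suzuki k A) (α : ℕ × ℕ) : A →ₗ[k] A :=
  S.bas.constr k fun p => if S.deg p = α then S.bas p else 0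

lemma proj_bas (S : Suzuki k A) (α : ℕ × ℕ) (p) :
    S.proj α (S.bas p) = if S.deg p = α then S.bas p else 0 := by
  rw [proj, Module.Basis.constr_basis]

lemma proj_Z (S : Suzuki k A) (α : ℕ × ℕ) (i j : Fin 2) (s t : ℕ) (hs : 1 ≤ s) (hs' : s ≤ S.N)
    (ht : t ≤ S.n) : S.proj α (S.Z s t i j) = (if (s, t) = α then 1 else 0 : k) • S.Z s t i j := by
  obtain ⟨c, p, hp, h⟩ := S.Z_eq_smul_basis i j s t hs hs' ht
  rw [h, map_smul, proj_bas, hp]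
  split_ifs <;> simp

/-- The functional `e = ε ∘ P` of a block projection `P` recovers `P` by `(e ⊗ id) Δ = P`. -/
lemma rTensor_proj (S : Suzuki k A) (α : ℕ × ℕ) :
    (TensorProduct.lid k A).toLinearMap ∘ₗ
      (Coalgebra.counit (R := k) ∘ₗ S.proj α).rTensor A ∘ₗ Coalgebra.comul (R := k) = S.proj α := by
  refine S.bas.ext fun p => ?_
  obtain ⟨c, i, j, h⟩ := S.basis_eq_smul_Z p
  obtain ⟨h1, h2, h3⟩ := S.deg_bounds p
  have hc := congrArg (TensorProduct.lid k A)
    (Coalgebra.rTensor_counit_comul (R := k) (S.Z (S.deg p).1 (S.deg p).2 i j))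
  rw [h, map_smul, map_smul, proj_Z _ _ _ _ _ _ h1 h2 h3]
  rw [comul_Z _ _ _ h1] at hc
  simp only [map_add, LinearMap.rTensor_tmul, TensorProduct.lid_tmul, one_smul] at hc
  congr 1
  simp only [LinearMap.comp_apply, LinearEquiv.coe_coe]
  rw [comul_Z _ _ _ h1]
  simp only [map_add, LinearMap.rTensor_tmul, TensorProduct.lid_tmul, LinearMap.comp_apply,
    proj_Z _ _ _ _ _ _ h1 h2 h3, map_smul, smul_assoc]
  rw [← smul_add, hc]

lemma lTensor_proj (S : Suzuki k A) (α : ℕ × ℕ) :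
    (TensorProduct.rid k A).toLinearMap ∘ₗ
      (Coalgebra.counit (R := k) ∘ₗ S.proj α).lTensor A ∘ₗ Coalgebra.comul (R := k) = S.proj α := by
  refine S.bas.ext fun p => ?_
  obtain ⟨c, i, j, h⟩ := S.basis_eq_smul_Z p
  obtain ⟨h1, h2, h3⟩ := S.deg_bounds p
  have hc := congrArg (TensorProduct.rid k A)
    (Coalgebra.lTensor_counit_comul (R := k) (S.Z (S.deg p).1 (S.deg p).2 i j))
  rw [h, map_smul, map_smul, proj_Z _ _ _ _ _ _ h1 h2 h3]
  rw [comul_Z _ _ _ h1] at hc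
  simp only [map_add, LinearMap.lTensor_tmul, TensorProduct.rid_tmul, one_smul] at hc
  congr 1
  simp only [LinearMap.comp_apply, LinearEquiv.coe_coe]
  rw [comul_Z _ _ _ h1]
  simp only [map_add, LinearMap.lTensor_tmul, TensorProduct.rid_tmul, LinearMap.comp_apply,
    proj_Z _ _ _ _ _ _ h1 h2 h3, map_smul, smul_assoc]
  rw [← smul_add, hc]

/-- The block `C_{st}`. -/
def block (S : Suzuki k A) (α : ℕ × ℕ) : Submodule k A :=
  Submodule.span k (Set.range fun p : Fin 2 × Fin 2 => S.Z α.1 α.2 p.1 p.2)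

lemma proj_mem_block (S : Suzuki k A) (α : ℕ × ℕ) (a : A) : S.proj α a ∈ S.block α := by
  have h : (⊤ : Submodule k A) ≤ (S.block α).comap (S.proj α) := by
    rw [← S.bas.span_eq, Submodule.span_le]
    rintro _ ⟨p, rfl⟩
    rw [SetLike.mem_coe, Submodule.mem_comap, proj_bas]
    split_ifs with h
    · obtain ⟨c, i, j, h'⟩ := S.basis_eq_smul_Z p
      rw [h', ← h]
      exact Submodule.smul_mem _ _ (Submodule.subset_span ⟨(i, j), rfl⟩)
    · exact Submodule.zero_mem _
  exact h Submodule.mem_top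

lemma exists_proj_ne_zero (S : Suzuki k A) {a : A} (ha : a ≠ 0) :
    ∃ p, S.proj (S.deg p) a ≠ 0 := by
  by_contra! h
  apply ha
  have key : ∀ q (a : A), S.bas.repr (S.proj (S.deg q) a) q = S.bas.repr a q := by
    intro q a
    have : (S.bas.coord q) ∘ₗ S.proj (S.deg q) = S.bas.coord q := by
      refine S.bas.ext fun p => ?_
      rw [LinearMap.comp_apply, proj_bas]
      split_ifs with hp
      · rfl
      · have : p ≠ q := fun e => hp (by rw [e])
        simp [this]
    exact LinearMap.congr_fun this a
  apply S.bas.repr.injective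
  ext q
  rw [← key q a, h q]

/-- A central functional is scalar on a comatrix subcoalgebra: comparing the coefficients of
`∑_k e(y_{ik}) y_{kj} = ∑_k e(y_{kj}) y_{ik}` for `i ≠ j` shows that the matrix `e(y_{ij})` is
scalar. -/
lemma scalar_of_central (S : Suzuki k A) (α : ℕ × ℕ) (y : Fin 2 → Fin 2 → A)
    (hy : LinearIndependent k fun p : Fin 2 × Fin 2 => y p.1 p.2)
    (hΔ : ∀ i j, Coalgebra.comul (R := k) (y i j) = y i 0 ⊗ₜ[k] y 0 j + y i 1 ⊗ₜ[k] y 1 j) :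
    ∃ c : k, ∀ i j, S.proj α (y i j) = c • y i j := by
  set e : A →ₗ[k] k := Coalgebra.counit (R := k) ∘ₗ S.proj α with he
  have hL : ∀ i j, S.proj α (y i j) = e (y i 0) • y 0 j + e (y i 1) • y 1 j := by
    intro i j
    rw [← LinearMap.congr_fun (S.rTensor_proj α) (y i j), ← he]
    simp [hΔ]
  have hR : ∀ i j, S.proj α (y i j) = e (y 0 j) • y i 0 + e (y 1 j) • y i 1 := by
    intro i j
    rw [← LinearMap.congr_fun (S.lTensor_proj α) (y i j), ← he]
    simp [hΔ]
  rw [Fintype.linearIndependent_iff] at hy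
  have h01 := (hL 0 1).symm.trans (hR 0 1)
  have h10 := (hL 1 0).symm.trans (hR 1 0)
  have g01 := hy (fun p => if p = (0, 0) then -e (y 0 1) else if p = (0, 1) then
    e (y 0 0) - e (y 1 1) else if p = (1, 1) then e (y 0 1) else 0) (by
      simp [Fintype.sum_prod_type, sub_smul]
      rw [← sub_eq_zero] at h01
      rw [← h01]
      module)
  have g10 := hy (fun p => if p = (0, 0) then e (y 1 0) else if p = (1, 1) then -e (y 1 0)
    else 0) (by
      have := g01 (0, 1)
      simp at this
      have h : e (y 0 0) = e (y 1 1) := by linear_combination this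
      rw [h] at h10
      simp [Fintype.sum_prod_type]
      rw [← sub_eq_zero] at h10
      rw [← h10]
      module)
  have a1 := g01 (0, 1)
  have a2 := g01 (1, 1)
  have a3 := g10 (0, 0)
  simp at a1 a2 a3
  have a4 : e (y 0 0) = e (y 1 1) := by linear_combination a1
  refine ⟨e (y 0 0), fun i j => ?_⟩
  rw [hL]
  fin_cases i <;> simp [a2, a3, a4]

/-! ### Dimensions -/

lemma x_indep (S : Suzuki k A) :
    LinearIndependent k fun p : Fin 2 × Fin 2 => S.x p.1 p.2 := by
  have hN := S.hN
  have hn := S.hn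
  -- `x_{1r}` and `x_{2,r+1}` are scalar multiples of the basis elements with `(m, t) = (1, 0)`
  -- and `(m, t) = (2N, 1)`.
  let f : Fin 2 × Fin 2 → Fin 2 × Fin (2 * S.N) × Fin S.n := fun p =>
    if p.1 = 0 then (p.2, ⟨0, by lia⟩, ⟨0, by lia⟩)
    else (p.2 + 1, ⟨2 * S.N - 1, by lia⟩, ⟨1, by lia⟩)
  have hf : Function.Injective f := by
    rintro ⟨i, j⟩ ⟨i', j'⟩ h
    fin_cases i <;> fin_cases i' <;> simp [f] at h <;> simp [h]
  let w : Fin 2 × Fin 2 → kˣ := fun p =>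
    if p.1 = 0 then 1 else ⟨S.sgnMu (p.2 + 1), S.sgnMu (p.2 + 1), S.sgnMu_sq _, S.sgnMu_sq _⟩
  have := (S.bas.linearIndependent.comp f hf).units_smul w
  convert this using 1
  ext ⟨i, j⟩
  obtain rfl | rfl : i = 0 ∨ i = 1 := by fin_cases i <;> simp
  · simp [f, w, bas_apply, chi]
  · have h := S.pow_twoN_mul (j + 1) 1
    have hj : (1 : Fin 2) + (j + 1) = j := by fin_cases j <;> rfl
    have hj' : j + 1 + 1 = j := by fin_cases j <;> rfl
    rw [hj] at h
    simp [f, w, bas_apply, chi, hj', Units.smul_def, show 2 * S.N - 1 + 1 = 2 * S.N by lia, h,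
      smul_smul, sgnMu_sq]

lemma finrank_block_le (S : Suzuki k A) (α : ℕ × ℕ) : Module.finrank k (S.block α) ≤ 4 :=
  finrank_range_le_card (R := k) fun p : Fin 2 × Fin 2 => S.Z α.1 α.2 p.1 p.2

/-- For `t = 0` and `t = n` the block is spanned by its first row. -/
lemma finrank_block_le_two (S : Suzuki k A) (α : ℕ × ℕ) (h : α.2 = 0 ∨ α.2 = S.n) :
    Module.finrank k (S.block α) ≤ 2 := by
  have hle : S.block α ≤ Submodule.span k (Set.range fun r : Fin 2 => S.Z α.1 α.2 0 r) := by
    refine Submodule.span_le.2 ?_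
    rintro _ ⟨⟨i, j⟩, rfl⟩
    obtain rfl | rfl : i = 0 ∨ i = 1 := by fin_cases i <;> simp
    · exact Submodule.subset_span ⟨j, rfl⟩
    obtain ⟨r, rfl⟩ : ∃ r, j = r + 1 := ⟨j + 1, by fin_cases j <;> rfl⟩
    rcases h with h | h
    · simp only [h, Z_t_zero]
      exact Submodule.subset_span ⟨r, rfl⟩
    · simp only [h, Z_n]
      exact Submodule.smul_mem _ _ (Submodule.subset_span ⟨r, rfl⟩)
  have : Module.Finite k (Submodule.span k (Set.range fun r : Fin 2 => S.Z α.1 α.2 0 r)) :=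
    Module.Finite.span_of_finite k (Set.finite_range _)
  exact (Submodule.finrank_mono hle).trans
    (finrank_range_le_card (R := k) fun r : Fin 2 => S.Z α.1 α.2 0 r)

lemma range_fin_two {B : Type*} (f : Fin 2 → Fin 2 → B) :
    (Set.range fun p : Fin 2 × Fin 2 => f p.1 p.2) = {f 0 0, f 0 1, f 1 0, f 1 1} := by
  ext a
  simp [Prod.exists, Fin.exists_fin_two, eq_comm, or_assoc]

lemma block_eq (S : Suzuki k A) (s t : ℕ) : S.block (s, t) = Submodule.span k
    {S.x 0 0 ^ (2 * s) * chi S.x 0 0 t, S.x 0 1 ^ (2 * s) * chi S.x 0 1 t,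
      S.x 0 0 ^ (2 * s) * chi S.x 1 1 t, S.x 0 1 ^ (2 * s) * chi S.x 1 0 t} := by
  have h1 : S.Z s t 1 1 = S.x 0 0 ^ (2 * s) * chi S.x 1 1 t := S.Z_one 0 s t
  have h0 : S.Z s t 1 0 = S.x 0 1 ^ (2 * s) * chi S.x 1 0 t := S.Z_one 1 s t
  rw [block, range_fin_two (fun i j => S.Z s t i j), h1, h0, Set.pair_comm (_ * chi S.x 1 0 t)]
  rfl

end Suzuki

/-- for every Hopf algebra automorphism ψ of A (with n of the given parity),
there are 1 ≤ s ≤ N and 1 ≤ t ≤ n-1 with ψ(C_{N1}) = C_{st}. -/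
theorem stmt4 (k A : Type*) [Field k] [CharZero k] [IsAlgClosed k]
    [Ring A] [HopfAlgebra k A] (S : Suzuki k A) (hpar : Odd S.n)
    (ψ : A ≃ₗ[k] A) (hψ : IsHopfAut k ψ) :
    ∃ s t : ℕ, 1 ≤ s ∧ s ≤ S.N ∧ 1 ≤ t ∧ t ≤ S.n - 1 ∧
      Submodule.map ψ.toLinearMap
          (Submodule.span k {S.x 0 0, S.x 0 1, S.x 1 0, S.x 1 1})
        = Submodule.span k
            {S.x 0 0 ^ (2 * s) * chi S.x 0 0 t, S.x 0 1 ^ (2 * s) * chi S.x 0 1 t,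
             S.x 0 0 ^ (2 * s) * chi S.x 1 1 t, S.x 0 1 ^ (2 * s) * chi S.x 1 0 t} := by
  obtain ⟨-, -, hΔ, -⟩ := hψ
  have hind : LinearIndependent k fun p : Fin 2 × Fin 2 => ψ (S.x p.1 p.2) :=
    S.x_indep.map' ψ.toLinearMap ψ.ker
  have hΔy : ∀ i j, Coalgebra.comul (R := k) (ψ (S.x i j))
      = ψ (S.x i 0) ⊗ₜ[k] ψ (S.x 0 j) + ψ (S.x i 1) ⊗ₜ[k] ψ (S.x 1 j) := by
    intro i j
    have h := S.comul_chi i j 1 le_rfl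
    simp only [chi, mul_one] at h
    rw [hΔ, h]
    simp
  obtain ⟨p, hp⟩ := S.exists_proj_ne_zero (hind.ne_zero (0, 0))
  obtain ⟨c, hc⟩ := S.scalar_of_central (S.deg p) (fun i j => ψ (S.x i j)) hind hΔy
  have hc0 : c ≠ 0 := by
    rintro rfl
    exact hp (by simpa using hc 0 0)
  have himg : Submodule.map ψ.toLinearMap
      (Submodule.span k {S.x 0 0, S.x 0 1, S.x 1 0, S.x 1 1})
      = Submodule.span k (Set.range fun p : Fin 2 × Fin 2 => ψ (S.x p.1 p.2)) := by
    rw [← Suzuki.range_fin_two S.x, Submodule.map_span, ← Set.range_comp]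
    rfl
  have hdim := finrank_span_eq_card hind
  simp only [Fintype.card_prod, Fintype.card_fin] at hdim
  have hle : Submodule.span k (Set.range fun p : Fin 2 × Fin 2 => ψ (S.x p.1 p.2))
      ≤ S.block (S.deg p) := by
    refine Submodule.span_le.2 ?_
    rintro _ ⟨⟨i, j⟩, rfl⟩
    have h : ψ (S.x i j) = c⁻¹ • S.proj (S.deg p) (ψ (S.x i j)) := by
      rw [hc i j, smul_smul, inv_mul_cancel₀ hc0, one_smul]
    simp only
    rw [h]
    exact Submodule.smul_mem _ _ (S.proj_mem_block _ _)
  have : Module.Finite k (S.block (S.deg p)) :=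
    Module.Finite.span_of_finite k (Set.finite_range _)
  have hmono := Submodule.finrank_mono hle
  obtain ⟨h1, h2, h3⟩ := S.deg_bounds p
  have ht : ¬((S.deg p).2 = 0 ∨ (S.deg p).2 = S.n) := fun h => by
    have := S.finrank_block_le_two _ h
    lia
  refine ⟨(S.deg p).1, (S.deg p).2, h1, h2, by lia, by lia, ?_⟩
  rw [himg, ← S.block_eq]
  refine Submodule.eq_of_le_of_finrank_le hle ?_
  have := S.finrank_block_le (S.deg p)
  rw [hdim]
  exact this
end
end

section
/- Let 1 ≤ s ≤ N, 1 ≤ t ≤ n − 1 with t odd, and set P = x11^{2s}χ11^t, Q = x11^{2s}χ22^t, R = x12^{2s}χ12^t, T = x12^{2s}χ21^t in A = A_{Nn}^{μλ}. For scalars a1, a2, a3, b1, b2, b3 ∈ k put y = a1·P + (1−a1)·Q + a2·R + a3·T and z = b1·P + (1−b1)·Q + b2·R + b3·T; then y² = z² if and only if (a1−b1)(1−a1−b1) = 0, a2² + a3² = b2² + b3², and moreover a2·a3 = b2·b3 when 2t ≠ n, while (1+λ)·a2·a3 = (1+λ)·b2·b3 when 2t = n. Likewise, for scalars d1, d2,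 d3, e1, e2, e3 ∈ k put u = d1·P − d1·Q + d2·R + d3·T and v = e1·P − e1·Q + e2·R + e3·T; then u² = v² if and only if d1² = e1², d2² + d3² = e2² + e3², and moreover d2·d3 = e2·e3 when 2t ≠ n, while (1+λ)·d2·d3 = (1+λ)·e2·e3 when 2t = n. -/
/-!
The algebra splits into a diagonal half (words in `x₁₁, x₂₂`) and an off-diagonal half (words in
`x₁₂, x₂₁`), and the two annihilate each other. In each half the two letters `p, q` have the same
square, which is therefore central there. For odd `t` the alternating words `w, w'` of length `t`
are palindromes, so `w² = w'² = p^{2t}`, while `w w'` and `w' w` are the alternating words of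
length `2t`. Hence (`half_sq`) the square of `c • P + d • Q` is
`(c² + d²) p^{4s+2t} + c d p^{4s} (χ_p^{2t} + χ_q^{2t})`, and likewise for `R, T`.

The second element expands in the given basis using only words `p^i χ_q^j` with `j > 0`
(`half_expand`): directly if `2t < n`, after folding `χ^{2t}` back to `χ^{2n-2t}` by means of
`χ_q^n = ± χ_p^n` if `2t > n`, and as `(1 + λ)` times one basis element if `2t = n`. So it is
independent of the powers of `p`, and comparing coefficients gives the criterion
(`Suzuki.comb_eq_zero_iff`). On the diagonal half the coefficient of the power of `p` alone
suffices: the sums of the `P`- and `Q`-coefficients agree on both sides, so the difference of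
`c² + d²` is `-2` times the difference of `c d`.
-/

open scoped TensorProduct

noncomputable section

/-! ### Alternating words in two letters with equal squares -/

/-- The alternating word `p * q * p * ⋯` with `m` letters; `chi x i j m` is the instance
`p = x i j`, `q = x (i+1) (j+1)`. -/
def alt {A : Type*} [Ring A] (p q : A) : ℕ → A
  | 0 => 1
  | m + 1 => p * alt q p m
termination_by m => m

theorem alt_zero {A : Type*} [Ring A] (p q : A) : alt p q 0 = 1 := by rw [alt]

theorem alt_succ {A : Type*} [Ring A] (p q : A) (m : ℕ) :
    alt p q (m + 1) = p * alt q p m := by rw [alt]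

theorem chi_eq_alt {A : Type*} [Ring A] (x : Fin 2 → Fin 2 → A) (m : ℕ) :
    ∀ i j, chi x i j m = alt (x i j) (x (i + 1) (j + 1)) m := by
  induction m with
  | zero => intro i j; rw [alt_zero, chi]
  | succ m ih =>
    intro i j
    have h2 : ∀ i : Fin 2, i + 1 + 1 = i := by decide
    rw [alt_succ, chi, ih, h2, h2]

theorem alt_add {A : Type*} [Ring A] (r m : ℕ) : ∀ p q : A,
    alt p q (m + r) = alt p q m * (if Even m then alt p q r else alt q p r) := by
  induction m with
  | zero => intro p q; simp [alt_zero]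
  | succ m ih =>
    intro p q
    rw [show m + 1 + r = (m + r) + 1 by ring, alt_succ, alt_succ, ih, mul_assoc]
    by_cases h : Even m <;> simp [h, Nat.even_add_one]

theorem commute_sq_alt {A : Type*} [Ring A] (m : ℕ) : ∀ {p q : A}, p ^ 2 = q ^ 2 →
    Commute (p ^ 2) (alt p q m) := by
  induction m with
  | zero => intro p q _; rw [alt_zero]; exact Commute.one_right _
  | succ m ih =>
    intro p q h
    rw [alt_succ]
    refine Commute.mul_right (Commute.pow_left (Commute.refl p) 2) ?_
    rw [h]; exact ih h.symm

/-- Multiplying a word of length `m + r` on the right by the alternating word of length `r`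
that starts with its last letter cancels `r` letters against the central square. -/
theorem alt_mul_cancel {A : Type*} [Ring A] {p q : A} (h : p ^ 2 = q ^ 2) (m r : ℕ) :
    alt p q (m + r) * (if Even (m + r) then alt q p r else alt p q r)
      = p ^ (2 * r) * alt p q m := by
  induction r with
  | zero => simp [alt_zero]
  | succ r ih =>
    have hc := (commute_sq_alt (m + r) h).eq
    have e1 : alt p q 1 = p := by rw [alt_succ, alt_zero, mul_one]
    have e2 : alt q p 1 = q := by rw [alt_succ, alt_zero, mul_one]
    have key : alt p q (m + r) * p ^ 2 * (if Even (m + r) then alt q p r else alt p q r)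
        = p ^ (2 * (r + 1)) * alt p q m := by
      rw [← hc, mul_assoc, ih, ← mul_assoc, ← pow_add]; congr 2; ring
    rw [← key, ← add_assoc, alt_add 1 (m + r), e1, e2, alt_succ, alt_succ]
    by_cases hm : Even (m + r)
    · simp [hm, Nat.even_add_one, pow_two, mul_assoc]
    · simp [hm, Nat.even_add_one, h, pow_two, mul_assoc]

theorem alt_mul_self {A : Type*} [Ring A] {p q : A} (h : p ^ 2 = q ^ 2) {t : ℕ}
    (ht : Odd t) : alt p q t * alt p q t = p ^ (2 * t) := by
  have := alt_mul_cancel h 0 t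
  rw [alt_zero, mul_one, zero_add, if_neg (Nat.not_even_iff_odd.2 ht)] at this
  exact this

theorem alt_mul_swap {A : Type*} [Ring A] (p q : A) {t : ℕ}
    (ht : Odd t) : alt p q t * alt q p t = alt p q (2 * t) := by
  rw [two_mul, alt_add, if_neg (Nat.not_even_iff_odd.2 ht)]

/-- If the two words of length `n` are proportional, a word of length between `n` and `2 * n`
folds back to the opposite word of length `2 * n - l`. -/
theorem alt_fold {k A : Type*} [Field k] [Ring A] [Algebra k A] {p q : A}
    (h : p ^ 2 = q ^ 2) {n : ℕ} {c : k} (hc : alt q p n = c • alt p q n) {m r : ℕ}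
    (hmr : m + r = n) : alt q p (n + r) = c • (p ^ (2 * r) * alt p q m) := by
  rw [alt_add, hc, smul_mul_assoc, ← alt_mul_cancel h, hmr]

theorem commute_pow_alt {A : Type*} [Ring A] {p q : A} (h : p ^ 2 = q ^ 2) (s m : ℕ) :
    Commute (p ^ (2 * s)) (alt p q m) := by
  rw [pow_mul]; exact (commute_sq_alt m h).pow_left s

theorem commute_pow_alt_swap {A : Type*} [Ring A] {p q : A} (h : p ^ 2 = q ^ 2) (s m : ℕ) :
    Commute (p ^ (2 * s)) (alt q p m) := by
  rw [pow_mul, h]; exact (commute_sq_alt m h.symm).pow_left s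

/-! ### Squares of the four-term elements -/

theorem half_sq {k A : Type*} [Field k] [Ring A] [Algebra k A] {p q : A}
    (h : p ^ 2 = q ^ 2) (s : ℕ) {t : ℕ} (ht : Odd t) (c d : k) :
    (c • (p ^ (2 * s) * alt p q t) + d • (p ^ (2 * s) * alt q p t)) ^ 2
      = (c ^ 2 + d ^ 2) • p ^ (4 * s + 2 * t)
        + (c * d) • (p ^ (4 * s) * (alt p q (2 * t) + alt q p (2 * t))) := by
  have mulform : ∀ X Y : A, Commute (p ^ (2 * s)) X →
      (p ^ (2 * s) * X) * (p ^ (2 * s) * Y) = p ^ (4 * s) * (X * Y) := by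
    intro X Y hX
    rw [mul_assoc, ← mul_assoc X, ← hX.eq, mul_assoc, ← mul_assoc, ← pow_add]
    congr 2; ring
  have hp := commute_pow_alt h s t
  have hq := commute_pow_alt_swap h s t
  have hqq : alt q p t * alt q p t = p ^ (2 * t) := by
    rw [alt_mul_self h.symm ht, pow_mul, pow_mul, h]
  rw [pow_two, add_mul, mul_add, mul_add]
  simp only [smul_mul_smul_comm]
  rw [mulform _ _ hp, mulform _ _ hp, mulform _ _ hq, mulform _ _ hq,
    alt_mul_self h ht, hqq, alt_mul_swap p q ht, alt_mul_swap q p ht, ← pow_add, mul_add (p ^ (4 * s))]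
  module

theorem half_mul_half {k A : Type*} [Field k] [Ring A] [Algebra k A] {p q p' q' : A}
    (h : p ^ 2 = q ^ 2) (hz : p * p' = 0) {s : ℕ} (hs : 1 ≤ s)
    (t : ℕ) (c d c' d' : k) :
    (c • (p ^ (2 * s) * alt p q t) + d • (p ^ (2 * s) * alt q p t))
      * (c' • (p' ^ (2 * s) * alt p' q' t) + d' • (p' ^ (2 * s) * alt q' p' t)) = 0 := by
  have hpow : p ^ (2 * s) * p' ^ (2 * s) = 0 := by
    obtain ⟨e, he⟩ : ∃ e, 2 * s = e + 1 := ⟨2 * s - 1, by omega⟩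
    rw [he, pow_succ, pow_succ', mul_assoc, ← mul_assoc p, hz, zero_mul, mul_zero]
  rw [(commute_pow_alt h s t).eq, (commute_pow_alt_swap h s t).eq, ← smul_mul_assoc,
    ← smul_mul_assoc, ← add_mul, ← mul_smul_comm, ← mul_smul_comm, ← mul_add,
    mul_assoc, ← mul_assoc (p ^ (2 * s)), hpow, zero_mul, mul_zero]

/-! ### Expansion in the given basis -/

theorem pow_reduce {k A : Type*} [Field k] [Ring A] [Algebra k A] {p : A} {M : ℕ}
    {c : k} (hM : 1 ≤ M) (hc : c ≠ 0) (hp : p ^ (M + 1) = c • p) (e : ℕ) (he : 1 ≤ e) :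
    ∃ (i : Fin M) (r : k), r ≠ 0 ∧ p ^ e = r • p ^ ((i : ℕ) + 1) := by
  induction e using Nat.strong_induction_on with
  | _ e ih =>
    by_cases h : e ≤ M
    · refine ⟨⟨e - 1, by omega⟩, 1, one_ne_zero, ?_⟩
      rw [one_smul]; congr 1; simp only; omega
    · obtain ⟨i, r, hr, hi⟩ := ih (e - M) (by omega) (by omega)
      refine ⟨i, c * r, mul_ne_zero hc hr, ?_⟩
      rw [mul_smul, ← hi]
      obtain ⟨f, rfl⟩ : ∃ f, e = f + (M + 1) := ⟨e - (M + 1), by omega⟩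
      rw [pow_add, hp, mul_smul_comm, ← pow_succ]
      congr 2; omega

/-- Expansion of `p ^ (4 * s) * (alt p q (2 * t) + alt q p (2 * t))` in the elements
`p ^ (i + 1) * alt q p j`. Only positive `j` occur, so it is independent of the powers of `p`;
the common factor is zero only for `2 * t = n` and `c = -1`. In the case `2 * t = n` the second
summand is superfluous and `r₂ = 0`. -/
theorem half_expand {k A : Type*} [Field k] [Ring A] [Algebra k A] {p q : A}
    (h : p ^ 2 = q ^ 2) {M n : ℕ} (hM : 1 ≤ M) {c ν : k} (hν : ν ≠ 0)
    (hp : p ^ (M + 1) = ν • p) (hc : alt q p n = c • alt p q n) (hc2 : c * c = 1)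
    {s t : ℕ} (hs : 1 ≤ s) (ht : 1 ≤ t) (htn : t + 1 ≤ n) :
    ∃ (i₁ i₂ : Fin M) (j₁ j₂ : Fin n) (r₁ r₂ : k), r₁ ≠ 0 ∧ 0 < (j₁ : ℕ) ∧ 0 < (j₂ : ℕ) ∧
      (r₂ ≠ 0 → j₁ ≠ j₂) ∧
      p ^ (4 * s) * (alt p q (2 * t) + alt q p (2 * t))
        = (r₁ * (if 2 * t = n then 1 + c else 1)) • (p ^ ((i₁ : ℕ) + 1) * alt q p j₁)
        + (r₂ * (if 2 * t = n then 1 + c else 1)) • (p ^ ((i₂ : ℕ) + 1) * alt q p j₂) := by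
  have hc0 : c ≠ 0 := fun h0 => by simp [h0] at hc2
  by_cases h2 : 2 * t = n
  · obtain ⟨i, r, hr, hi⟩ := pow_reduce hM hν hp (4 * s + 1) (by omega)
    refine ⟨i, i, ⟨n - 1, by omega⟩, ⟨n - 1, by omega⟩, r, 0, hr, ?_, ?_, by simp, ?_⟩
    · simp only; omega
    · simp only; omega
    · obtain ⟨n, rfl⟩ : ∃ n', n = n' + 1 := ⟨n - 1, by omega⟩
      simp only [h2, hc, if_true, Nat.add_sub_cancel, zero_mul, zero_smul, add_zero]
      rw [mul_comm r, mul_smul, ← smul_mul_assoc r, ← hi, alt_succ, pow_succ, mul_assoc,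
        mul_add, mul_smul_comm]
      module
  -- Reduce to a word length strictly between `1` and `n`.
  · obtain ⟨e, m, κ, hκ, he, hm1, hmn, hE⟩ : ∃ (e m : ℕ) (κ : k), κ ≠ 0 ∧ 1 ≤ e ∧ 1 ≤ m ∧
        m + 1 < n ∧ p ^ (4 * s) * (alt p q (2 * t) + alt q p (2 * t))
          = κ • (p ^ e * (alt p q (m + 1) + alt q p (m + 1))) := by
      rcases lt_or_gt_of_ne h2 with hlt | hgt
      · refine ⟨4 * s, 2 * t - 1, 1, one_ne_zero, by omega, by omega, by omega, ?_⟩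
        rw [one_smul, show 2 * t - 1 + 1 = 2 * t by omega]
      · obtain ⟨r, hr⟩ : ∃ r, 2 * t = n + r := ⟨2 * t - n, by omega⟩
        obtain ⟨m, hm⟩ : ∃ m, m + 1 + r = n := ⟨n - r - 1, by omega⟩
        have hc' : alt p q n = c • alt q p n := by rw [hc, smul_smul, hc2, one_smul]
        refine ⟨4 * s + 2 * r, m, c, hc0, by omega, by omega, by omega, ?_⟩
        rw [hr, alt_fold h hc hm, alt_fold h.symm hc' hm, pow_mul q, ← h, ← pow_mul, pow_add,
          ← smul_add, ← mul_add, mul_smul_comm, mul_assoc, add_comm (alt q p (m + 1))]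
    obtain ⟨i₁, r₁, hr₁, hi₁⟩ := pow_reduce hM hν hp (e + 1) (by omega)
    obtain ⟨i₂, r₂, hr₂, hi₂⟩ := pow_reduce hM hν hp e he
    refine ⟨i₁, i₂, ⟨m, by omega⟩, ⟨m + 1, by omega⟩, κ * r₁, κ * r₂, mul_ne_zero hκ hr₁,
      hm1, by simp, by simp, ?_⟩
    rw [hE, if_neg h2, mul_one, mul_one, mul_smul, mul_smul, ← smul_mul_assoc r₁, ← hi₁,
      ← smul_mul_assoc r₂, ← hi₂, ← smul_add, alt_succ p q m, pow_succ, mul_assoc, mul_add]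

/-- The linear independence behind both criteria. The coefficients `-2 * α`, `α` are those
produced on the diagonal half, where the sum of the coefficients of `P` and `Q` is fixed. -/
theorem Suzuki.comb_eq_zero_iff {k A : Type*} [Field k] [CharZero k] [IsAlgClosed k]
    [Ring A] [HopfAlgebra k A] (S : Suzuki k A) {s t : ℕ} (hs : 1 ≤ s) (ht : 1 ≤ t)
    (htn : t + 1 ≤ S.n) (α β γ : k) :
    (-2 * α) • S.x 0 0 ^ (4 * s + 2 * t)
      + α • (S.x 0 0 ^ (4 * s) * (alt (S.x 0 0) (S.x 1 1) (2 * t)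
          + alt (S.x 1 1) (S.x 0 0) (2 * t)))
      + β • S.x 0 1 ^ (4 * s + 2 * t)
      + γ • (S.x 0 1 ^ (4 * s) * (alt (S.x 0 1) (S.x 1 0) (2 * t)
          + alt (S.x 1 0) (S.x 0 1) (2 * t))) = 0
      ↔ α = 0 ∧ β = 0 ∧ γ * (if 2 * t = S.n then 1 + S.lam else 1) = 0 := by
  have hN := S.hN
  have hn := S.hn
  have h01 : S.x 0 0 * S.x 0 1 = 0 := S.rel_odd 0 0 0 1 (by decide)
  have h10 : S.x 0 1 * S.x 0 0 = 0 := S.rel_odd 0 1 0 0 (by decide)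
  have hμ2 : S.μ * S.μ = 1 := by rcases S.hμ with h | h <;> rw [h] <;> ring
  have hl2 : S.lam * S.lam = 1 := by rcases S.hlam with h | h <;> rw [h] <;> ring
  have hμ0 : S.μ ≠ 0 := fun h0 => by simp [h0] at hμ2
  obtain ⟨e, he⟩ : ∃ e, 2 * S.N = e + 1 := ⟨2 * S.N - 1, by omega⟩
  have hpa : S.x 0 0 ^ (2 * S.N + 1) = (1 : k) • S.x 0 0 := by
    have := congrArg (fun y => y * S.x 0 0) S.rel_mu
    simp only [add_mul, smul_mul_assoc, one_mul] at this
    rw [he, pow_succ (S.x 0 1), mul_assoc (S.x 0 1 ^ e), h10, mul_zero, smul_zero,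
      add_zero] at this
    rw [he, one_smul, pow_succ, this]
  have hpb : S.x 0 1 ^ (2 * S.N + 1) = S.μ • S.x 0 1 := by
    have := congrArg (fun y => y * S.x 0 1) S.rel_mu
    simp only [add_mul, smul_mul_assoc, one_mul] at this
    rw [he, pow_succ (S.x 0 0), mul_assoc (S.x 0 0 ^ e), h01, mul_zero, zero_add] at this
    rw [he, pow_succ]
    conv_rhs => rw [← this]
    rw [smul_smul, hμ2, one_smul]
  have hca : alt (S.x 1 1) (S.x 0 0) S.n = (1 : k) • alt (S.x 0 0) (S.x 1 1) S.n := by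
    have := S.rel_chi2
    rw [chi_eq_alt, chi_eq_alt] at this
    rw [one_smul]; exact this.symm
  have hcb : alt (S.x 1 0) (S.x 0 1) S.n = S.lam • alt (S.x 0 1) (S.x 1 0) S.n := by
    have := S.rel_chi1
    rw [chi_eq_alt, chi_eq_alt] at this
    exact this
  obtain ⟨i₁, i₂, j₁, j₂, r₁, r₂, hr₁, hj₁, hj₂, hj, hE⟩ :=
    half_expand S.rel_sq1 (by omega) one_ne_zero hpa hca (one_mul 1) hs ht htn
  obtain ⟨i₁', i₂', j₁', j₂', r₁', r₂', hr₁', hj₁', hj₂', hj', hE'⟩ :=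
    half_expand S.rel_sq2 (by omega) hμ0 hpb hcb hl2 hs ht htn
  obtain ⟨i, r, hr, hi⟩ := pow_reduce (by omega) one_ne_zero hpa (4 * s + 2 * t) (by omega)
  obtain ⟨i', r', hr', hi'⟩ := pow_reduce (by omega) hμ0 hpb (4 * s + 2 * t) (by omega)
  let B := Module.Basis.mk S.basis_indep S.basis_span.ge
  have hB0 : ∀ (i : Fin (2 * S.N)) (j : Fin S.n),
      S.x 0 0 ^ ((i : ℕ) + 1) * alt (S.x 1 1) (S.x 0 0) j = B (0, i, j) := by
    intro i j
    have h1 := chi_eq_alt S.x (j : ℕ) 1 1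
    simp [B, h1]
  have hB1 : ∀ (i : Fin (2 * S.N)) (j : Fin S.n),
      S.x 0 1 ^ ((i : ℕ) + 1) * alt (S.x 1 0) (S.x 0 1) j = B (1, i, j) := by
    intro i j
    have h1 := chi_eq_alt S.x (j : ℕ) 1 0
    simp [B, h1]
  let z : Fin S.n := ⟨0, by omega⟩
  have hz0 : ∀ i : Fin (2 * S.N), S.x 0 0 ^ ((i : ℕ) + 1) = B (0, i, z) := by
    intro i; rw [← hB0, alt_zero, mul_one]
  have hz1 : ∀ i : Fin (2 * S.N), S.x 0 1 ^ ((i : ℕ) + 1) = B (1, i, z) := by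
    intro i; rw [← hB1, alt_zero, mul_one]
  rw [hE, hE', hi, hi', hB0, hB0, hB1, hB1, hz0, hz1]
  have n1 : j₁ ≠ z := fun h0 => by simp [h0, z] at hj₁
  have n2 : j₂ ≠ z := fun h0 => by simp [h0, z] at hj₂
  have n1' : j₁' ≠ z := fun h0 => by simp [h0, z] at hj₁'
  have n2' : j₂' ≠ z := fun h0 => by simp [h0, z] at hj₂'
  generalize (if 2 * t = S.n then 1 + S.lam else 1) = δ at *
  generalize (if 2 * t = S.n then 1 + (1 : k) else 1) = δ₀ at *
  constructor
  · intro h0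
    have c0 := congrArg (B.coord (0, i, z)) h0
    have c1 := congrArg (B.coord (1, i', z)) h0
    have c2 := congrArg (B.coord (1, i₁', j₁')) h0
    simp [n1, n2, hr] at c0
    simp [n1', n2', hr'] at c1
    refine ⟨c0, c1, ?_⟩
    by_cases hr2 : r₂' = 0
    · simp [n1'.symm, hr2, hr₁'] at c2
      simpa using c2
    · simp [n1'.symm, (hj' hr2).symm, hr₁'] at c2
      simpa using c2
  · rintro ⟨rfl, rfl, hγ⟩
    have e1 : γ * (r₁' * δ) = 0 := by linear_combination r₁' * hγ
    have e2 : γ * (r₂' * δ) = 0 := by linear_combination r₂' * hγ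
    simp only [smul_add, smul_smul, e1, e2]
    simp

/-- The common form of both criteria: the sum of the `P`- and `Q`-coefficients is `1` for
`y, z` and `0` for `u, v`; only the equality of its squares matters. -/
theorem Suzuki.sq_eq_sq_iff {k A : Type*} [Field k] [CharZero k] [IsAlgClosed k]
    [Ring A] [HopfAlgebra k A] (S : Suzuki k A) {s t : ℕ} (hs : 1 ≤ s) (ht : 1 ≤ t)
    (htn : t + 1 ≤ S.n) (hodd : Odd t) {P Q R T : A}
    (hP : P = S.x 0 0 ^ (2 * s) * chi S.x 0 0 t)
    (hQ : Q = S.x 0 0 ^ (2 * s) * chi S.x 1 1 t)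
    (hR : R = S.x 0 1 ^ (2 * s) * chi S.x 0 1 t)
    (hT : T = S.x 0 1 ^ (2 * s) * chi S.x 1 0 t)
    (f₁ f₂ f₃ f₄ g₁ g₂ g₃ g₄ : k) (hsum : (f₁ + f₂) ^ 2 = (g₁ + g₂) ^ 2) :
    (f₁ • P + f₂ • Q + f₃ • R + f₄ • T) ^ 2 = (g₁ • P + g₂ • Q + g₃ • R + g₄ • T) ^ 2
      ↔ f₁ * f₂ = g₁ * g₂ ∧ f₃ ^ 2 + f₄ ^ 2 = g₃ ^ 2 + g₄ ^ 2 ∧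
        (2 * t ≠ S.n → f₃ * f₄ = g₃ * g₄) ∧
        (2 * t = S.n → (1 + S.lam) * (f₃ * f₄) = (1 + S.lam) * (g₃ * g₄)) := by
  have h01 : S.x 0 0 * S.x 0 1 = 0 := S.rel_odd 0 0 0 1 (by decide)
  have h10 : S.x 0 1 * S.x 0 0 = 0 := S.rel_odd 0 1 0 0 (by decide)
  have hP' : P = S.x 0 0 ^ (2 * s) * alt (S.x 0 0) (S.x 1 1) t := by
    rw [hP, chi_eq_alt]; rfl
  have hQ' : Q = S.x 0 0 ^ (2 * s) * alt (S.x 1 1) (S.x 0 0) t := by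
    rw [hQ, chi_eq_alt]; rfl
  have hR' : R = S.x 0 1 ^ (2 * s) * alt (S.x 0 1) (S.x 1 0) t := by
    rw [hR, chi_eq_alt]; rfl
  have hT' : T = S.x 0 1 ^ (2 * s) * alt (S.x 1 0) (S.x 0 1) t := by
    rw [hT, chi_eq_alt]; rfl
  clear hP hQ hR hT
  have expand : ∀ c₁ c₂ c₃ c₄ : k, (c₁ • P + c₂ • Q + c₃ • R + c₄ • T) ^ 2
      = (c₁ • P + c₂ • Q) ^ 2 + (c₃ • R + c₄ • T) ^ 2 := by
    intro c₁ c₂ c₃ c₄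
    have z1 : (c₁ • P + c₂ • Q) * (c₃ • R + c₄ • T) = 0 := by
      rw [hP', hQ', hR', hT']; exact half_mul_half S.rel_sq1 h01 hs t _ _ _ _
    have z2 : (c₃ • R + c₄ • T) * (c₁ • P + c₂ • Q) = 0 := by
      rw [hP', hQ', hR', hT']; exact half_mul_half S.rel_sq2 h10 hs t _ _ _ _
    rw [add_assoc, pow_two, add_mul, mul_add (c₁ • P + c₂ • Q), mul_add (c₃ • R + c₄ • T), z1, z2, add_zero, zero_add,
      ← pow_two, ← pow_two]
  have key := S.comb_eq_zero_iff hs ht htn (f₁ * f₂ - g₁ * g₂)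
    (f₃ ^ 2 + f₄ ^ 2 - (g₃ ^ 2 + g₄ ^ 2)) (f₃ * f₄ - g₃ * g₄)
  have hcoef : -2 * (f₁ * f₂ - g₁ * g₂) = (f₁ ^ 2 + f₂ ^ 2) - (g₁ ^ 2 + g₂ ^ 2) := by
    linear_combination -hsum
  rw [hcoef] at key
  rw [expand, expand, hP', hQ', hR', hT', half_sq S.rel_sq1 s hodd, half_sq S.rel_sq1 s hodd,
    half_sq S.rel_sq2 s hodd, half_sq S.rel_sq2 s hodd, ← sub_eq_zero]
  have hfin : (f₁ * f₂ - g₁ * g₂ = 0 ∧ f₃ ^ 2 + f₄ ^ 2 - (g₃ ^ 2 + g₄ ^ 2) = 0 ∧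
      (f₃ * f₄ - g₃ * g₄) * (if 2 * t = S.n then 1 + S.lam else 1) = 0)
      ↔ (f₁ * f₂ = g₁ * g₂ ∧ f₃ ^ 2 + f₄ ^ 2 = g₃ ^ 2 + g₄ ^ 2 ∧
        (2 * t ≠ S.n → f₃ * f₄ = g₃ * g₄) ∧
        (2 * t = S.n → (1 + S.lam) * (f₃ * f₄) = (1 + S.lam) * (g₃ * g₄))) := by
    rw [sub_eq_zero, sub_eq_zero]
    by_cases h2 : 2 * t = S.n
    · simp only [h2, if_true, ne_eq, not_true_eq_false, false_implies, true_implies, true_and]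
      rw [sub_mul, sub_eq_zero, mul_comm (f₃ * f₄), mul_comm (g₃ * g₄)]
    · simp only [h2, if_false, ne_eq, not_false_eq_true, false_implies, true_implies, and_true,
        mul_one, sub_eq_zero]
  rw [← hfin, ← key]
  refine Eq.congr ?_ rfl
  module

/-- t odd: criteria for `y² = z²` and `u² = v²`. -/
theorem stmt6 (k A : Type*) [Field k] [CharZero k] [IsAlgClosed k]
    [Ring A] [HopfAlgebra k A] (S : Suzuki k A)
    (s t : ℕ) (hs1 : 1 ≤ s) (hs2 : s ≤ S.N) (ht1 : 1 ≤ t) (ht2 : t ≤ S.n - 1)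
    (htodd : Odd t)
    (P Q R T : A)
    (hP : P = S.x 0 0 ^ (2 * s) * chi S.x 0 0 t)
    (hQ : Q = S.x 0 0 ^ (2 * s) * chi S.x 1 1 t)
    (hR : R = S.x 0 1 ^ (2 * s) * chi S.x 0 1 t)
    (hT : T = S.x 0 1 ^ (2 * s) * chi S.x 1 0 t)
    (a1 a2 a3 b1 b2 b3 d1 d2 d3 e1 e2 e3 : k) :
    ((a1 • P + (1 - a1) • Q + a2 • R + a3 • T) ^ 2
        = (b1 • P + (1 - b1) • Q + b2 • R + b3 • T) ^ 2
      ↔ (a1 - b1) * (1 - a1 - b1) = 0 ∧ a2 ^ 2 + a3 ^ 2 = b2 ^ 2 + b3 ^ 2 ∧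
        (2 * t ≠ S.n → a2 * a3 = b2 * b3) ∧
        (2 * t = S.n → (1 + S.lam) * (a2 * a3) = (1 + S.lam) * (b2 * b3)))
    ∧ ((d1 • P - d1 • Q + d2 • R + d3 • T) ^ 2
        = (e1 • P - e1 • Q + e2 • R + e3 • T) ^ 2
      ↔ d1 ^ 2 = e1 ^ 2 ∧ d2 ^ 2 + d3 ^ 2 = e2 ^ 2 + e3 ^ 2 ∧
        (2 * t ≠ S.n → d2 * d3 = e2 * e3) ∧
        (2 * t = S.n → (1 + S.lam) * (d2 * d3) = (1 + S.lam) * (e2 * e3))) := by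
  have htn : t + 1 ≤ S.n := by have := S.hn; omega
  constructor
  · rw [S.sq_eq_sq_iff hs1 ht1 htn htodd hP hQ hR hT _ _ _ _ _ _ _ _ (by ring)]
    refine and_congr_left fun _ => ?_
    constructor <;> intro h <;> linear_combination h
  · have h := S.sq_eq_sq_iff hs1 ht1 htn htodd hP hQ hR hT d1 (-d1) d2 d3 e1 (-e1) e2 e3 (by ring)
    rw [neg_smul, neg_smul, ← sub_eq_add_neg, ← sub_eq_add_neg] at h
    rw [h]
    refine and_congr_left fun _ => ?_
    constructor <;> intro h <;> linear_combination -h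
end
end
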